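/- arXiv:1412.5394 — 3 statements merged into one kernel-verified Lean document; each statement's English description precedes it below -/
import Mathlib

section
/- Let p > 3 be a prime. Let m(p) be the minimal integer m such that there exist subsets A_1, ..., A_m of [4p], each of size 2p, with the property that every subset B ⊆ [4p] of size 2p satisfies |A_i ∩ B| = p for at least one i. Then m(p) ≥ p. -/
/-!
The proof is the polynomial method over `ZMod p`. Suppose `m < p`.

By counting (`exists_splitting_set`) there is a set `D` of size `p` that no `A i` contains and no
`A i` misses, so that `∏ i, |A i ∩ D|` is nonzero mod `p`. Fix a set `E` of size `2p - 1` disjoint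
from `D`, and consider for `T ⊆ E` the function
`F T = (∏ i, |A i ∩ (D ∪ T)|) * (1 - |T| ^ (p - 1))` with values in `ZMod p`.
By Fermat it vanishes unless `p ∣ |T|`, that is, unless `T = ∅` or `|T| = p`; in the latter case
`D ∪ T` has size `2p`, so some `|A i ∩ (D ∪ T)|` equals `p` and `F T = 0`. Hence `F` is supported
on `T = ∅` alone. But as a polynomial in the indicator vector of `T` it has degree at most
`m + (p - 1) < 2p - 1 = |E|`, so its alternating sum over all `T ⊆ E` is zero
(`sum_powerset_neg_one_pow_mul_prod`), which forces `F ∅ = ∏ i, |A i ∩ D| = 0`, a contradiction.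
-/

open Finset in
/-- A product of fewer than `|E|` affine functions of the indicator vector of `T` has vanishing
alternating sum over `T ⊆ E`: adding an element to `T` is a difference operator, which lowers the
number of factors. -/
lemma sum_powerset_neg_one_pow_mul_prod {R α ι : Type*} [CommRing R] [DecidableEq α]
    [DecidableEq ι] (c : ι → R) (w : ι → α → R) (E : Finset α) (I : Finset ι)
    (h : I.card < E.card) :
    ∑ T ∈ E.powerset, (-1) ^ T.card * ∏ i ∈ I, (c i + ∑ e ∈ T, w i e) = 0 := by
  induction E using Finset.induction_on generalizing I with
  | empty => simp at h
  | insert a s ha ih =>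
    rw [card_insert_of_notMem ha] at h
    rw [sum_powerset_insert ha, ← sum_add_distrib]
    have key : ∀ T ∈ s.powerset,
        (-1) ^ T.card * ∏ i ∈ I, (c i + ∑ e ∈ T, w i e) +
          (-1) ^ (insert a T).card * ∏ i ∈ I, (c i + ∑ e ∈ insert a T, w i e) =
        -∑ J ∈ I.ssubsets, (∏ i ∈ I \ J, w i a) *
          ((-1) ^ T.card * ∏ i ∈ J, (c i + ∑ e ∈ T, w i e)) := by
      intro T hT
      have haT : a ∉ T := fun h' => ha (mem_powerset.1 hT h')
      have h1 : ∏ i ∈ I, (c i + ∑ e ∈ insert a T, w i e) =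
          ∏ i ∈ I, (c i + ∑ e ∈ T, w i e) +
            ∑ J ∈ I.ssubsets, (∏ i ∈ J, (c i + ∑ e ∈ T, w i e)) * ∏ i ∈ I \ J, w i a := by
        calc _ = ∏ i ∈ I, ((c i + ∑ e ∈ T, w i e) + w i a) :=
              prod_congr rfl fun i _ => by rw [sum_insert haT]; ring
          _ = _ := by
            rw [prod_add, ssubsets, ← add_sum_erase _ _ (mem_powerset_self I), sdiff_self]
            simp
      have h2 : ∑ J ∈ I.ssubsets, (∏ i ∈ I \ J, w i a) *
          ((-1) ^ T.card * ∏ i ∈ J, (c i + ∑ e ∈ T, w i e)) =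
          (-1) ^ T.card *
            ∑ J ∈ I.ssubsets, (∏ i ∈ J, (c i + ∑ e ∈ T, w i e)) * ∏ i ∈ I \ J, w i a := by
        rw [mul_sum]
        exact sum_congr rfl fun J _ => by ring
      rw [h1, h2, card_insert_of_notMem haT]
      ring
    rw [sum_congr rfl key, sum_neg_distrib, sum_comm, neg_eq_zero]
    refine sum_eq_zero fun J hJ => ?_
    rw [← mul_sum, ih J, mul_zero]
    have := card_lt_card (mem_ssubsets.1 hJ)
    omega

lemma two_pow_mul_descFactorial_le (a k : ℕ) :
    2 ^ k * a.descFactorial k ≤ (2 * a).descFactorial k := by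
  induction k with
  | zero => simp
  | succ k ih =>
    rw [Nat.descFactorial_succ, Nat.descFactorial_succ]
    calc 2 ^ (k + 1) * ((a - k) * a.descFactorial k)
        = (2 * (a - k)) * (2 ^ k * a.descFactorial k) := by ring
      _ ≤ (2 * a - k) * (2 * a).descFactorial k := Nat.mul_le_mul (by omega) ih

lemma two_pow_mul_choose_le (a k : ℕ) : 2 ^ k * a.choose k ≤ (2 * a).choose k := by
  have h := two_pow_mul_descFactorial_le a k
  rw [Nat.descFactorial_eq_factorial_mul_choose, Nat.descFactorial_eq_factorial_mul_choose] at h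
  refine Nat.le_of_mul_le_mul_left ?_ (Nat.factorial_pos k)
  linarith

open Finset in
/-- Union bound: each half-size set and each complement of one contains at most a `2⁻ᵖ`
fraction of all `p`-subsets, and `2m < 2ᵖ`. -/
lemma exists_splitting_set (p m : ℕ) (h3 : 3 < p) (hm : m < p)
    (A : Fin m → Finset (Fin (4 * p))) (hA : ∀ i, (A i).card = 2 * p) :
    ∃ D : Finset (Fin (4 * p)), D.card = p ∧ ∀ i, 0 < (A i ∩ D).card ∧ (A i ∩ D).card < p := by
  by_contra! hcon
  have hsub : powersetCard p (univ : Finset (Fin (4 * p))) ⊆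
      univ.biUnion fun i => powersetCard p (A i) ∪ powersetCard p (A i)ᶜ := by
    intro D hD
    have hDp := (mem_powersetCard.1 hD).2
    obtain ⟨i, hi⟩ := hcon D hDp
    refine mem_biUnion.2 ⟨i, mem_univ i, ?_⟩
    rw [mem_union, mem_powersetCard, mem_powersetCard]
    rcases Nat.eq_zero_or_pos (A i ∩ D).card with h0 | h0
    · right
      rw [card_eq_zero, ← disjoint_iff_inter_eq_empty] at h0
      exact ⟨le_compl_iff_disjoint_left.2 h0, hDp⟩
    · left
      have : A i ∩ D = D := eq_of_subset_of_card_le inter_subset_right (by rw [hDp]; exact hi h0)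
      exact ⟨inter_eq_right.1 this, hDp⟩
  have h1 : (4 * p).choose p ≤ m * (2 * (2 * p).choose p) := by
    calc (4 * p).choose p = (powersetCard p (univ : Finset (Fin (4 * p)))).card := by simp
      _ ≤ _ := card_le_card hsub
      _ ≤ (univ : Finset (Fin m)).card * (2 * (2 * p).choose p) := by
        refine card_biUnion_le_card_mul _ _ _ fun i _ => (card_union_le _ _).trans ?_
        have hc : (A i)ᶜ.card = 2 * p := by
          rw [card_compl, Fintype.card_fin, hA]; omega
        rw [card_powersetCard, card_powersetCard, hA, hc]
        omega
      _ = _ := by simp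
  have h2 := two_pow_mul_choose_le (2 * p) p
  rw [show 2 * (2 * p) = 4 * p by ring] at h2
  have h4 : 0 < (2 * p).choose p := Nat.choose_pos (by omega)
  have h5 : 2 * m < 2 ^ p := by
    obtain ⟨q, rfl⟩ : ∃ q, p = q + 1 := ⟨p - 1, by omega⟩
    have : q < 2 ^ q := Nat.lt_two_pow_self
    rw [pow_succ]; omega
  nlinarith [Nat.mul_lt_mul_of_pos_right h5 h4]

/-- Galvin's problem for `n = p` prime, `p > 3`: if `A_1, …, A_m ⊆ [4p]` all have size `2p`
and every `2p`-element subset `B ⊆ [4p]` satisfies `|A_i ∩ B| = p` for some `i`,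
then `m ≥ p`. -/
theorem stmt7 (p m : ℕ) (hp : p.Prime) (h3 : 3 < p)
    (A : Fin m → Finset (Fin (4 * p))) (hA : ∀ i, (A i).card = 2 * p)
    (hbal : ∀ B : Finset (Fin (4 * p)), B.card = 2 * p → ∃ i, (A i ∩ B).card = p) :
    p ≤ m := by
  by_contra! hm
  have : Fact p.Prime := ⟨hp⟩
  obtain ⟨D, hD, hDA⟩ := exists_splitting_set p m h3 hm A hA
  obtain ⟨E, hED, hE⟩ : ∃ E ⊆ Dᶜ, E.card = 2 * p - 1 := by
    apply Finset.exists_subset_card_eq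
    rw [Finset.card_compl, Fintype.card_fin, hD]; omega
  -- `c i + ∑ e ∈ T, w i e` is `|A i ∩ (D ∪ T)|` mod `p`.
  let c : Fin m → ZMod p := fun i => ((A i ∩ D).card : ZMod p)
  let w : Fin m → Fin (4 * p) → ZMod p := fun i e => if e ∈ A i then 1 else 0
  have hcw : ∀ i, ∀ T ⊆ E, c i + ∑ e ∈ T, w i e = ((A i ∩ (D ∪ T)).card : ZMod p) := by
    intro i T hT
    have hdisj : Disjoint (A i ∩ D) (A i ∩ T) :=
      ((Finset.subset_compl_iff_disjoint_left.1 (hT.trans hED)).mono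
        Finset.inter_subset_right Finset.inter_subset_right)
    simp only [c, w]
    rw [Finset.inter_union_distrib_left, Finset.card_union_of_disjoint hdisj, Nat.cast_add,
      Finset.sum_boole, Finset.filter_mem_eq_inter, Finset.inter_comm T]
  have hs1 := sum_powerset_neg_one_pow_mul_prod c w E Finset.univ (by simp; omega)
  -- The `p - 1` extra factors, all equal to `|T|`, are indexed by `Fin (p - 1)`.
  have hs2 := sum_powerset_neg_one_pow_mul_prod (Sum.elim c fun _ : Fin (p - 1) => 0)
    (Sum.elim w fun _ _ => 1) E Finset.univ (by simp; omega)
  simp only [Fintype.prod_sum_type, Sum.elim_inl, Sum.elim_inr, zero_add, Finset.sum_const,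
    nsmul_eq_mul, mul_one, Finset.prod_const, Finset.card_univ, Fintype.card_fin] at hs2
  have hs := congrArg₂ (· - ·) hs1 hs2
  simp only [sub_zero] at hs
  rw [← Finset.sum_sub_distrib, Finset.sum_eq_single_of_mem ∅ (Finset.empty_mem_powerset E)] at hs
  · have h0 : p - 1 ≠ 0 := by omega
    simp only [Finset.card_empty, pow_zero, Finset.sum_empty, add_zero, one_mul, Nat.cast_zero,
      zero_pow h0, mul_zero, sub_zero, Finset.prod_eq_zero_iff] at hs
    obtain ⟨i, -, hi⟩ := hs
    have hdvd := (ZMod.natCast_eq_zero_iff _ _).1 hi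
    exact absurd (Nat.le_of_dvd (hDA i).1 hdvd) (not_le.2 (hDA i).2)
  · intro T hT hT0
    rw [Finset.mem_powerset] at hT
    by_cases hTp : (T.card : ZMod p) = 0
    · obtain ⟨k, hk⟩ := (ZMod.natCast_eq_zero_iff _ _).1 hTp
      have hTcard : T.card = p := by
        have h1 := Finset.card_le_card hT
        have h2 : 0 < T.card := Finset.card_pos.2 (Finset.nonempty_iff_ne_empty.2 hT0)
        have h4 : k ≠ 0 := by rintro rfl; simp at hk; exact hT0 hk
        have h5 : k < 2 := by
          by_contra! hk2
          have := Nat.mul_le_mul_left p hk2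
          omega
        have : k = 1 := by omega
        rw [hk, this, mul_one]
      obtain ⟨i, hi⟩ := hbal (D ∪ T) (by
        rw [Finset.card_union_of_disjoint
          (Finset.subset_compl_iff_disjoint_left.1 (hT.trans hED)), hD, hTcard]
        ring)
      have hz : ∏ i, (c i + ∑ e ∈ T, w i e) = 0 := by
        refine Finset.prod_eq_zero (Finset.mem_univ i) ?_
        rw [hcw i T hT, hi, ZMod.natCast_self]
      rw [hz]; ring
    · rw [ZMod.pow_card_sub_one_eq_one hTp]; ring
end

section
/- Let p be a prime dividing n, ω = e^{2πi/p}, and B = {1, ω, ..., ω^{p-1}}^n ⊆ ℂ^n. Suppose v_1, ..., v_k ∈ B are such that for every w ∈ B there exists i with Σ_j (v_i)_j w_j = 0. Then k ≥ n(p-1). -/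
open Complex

/-!
Let `μ_p` be the group of complex `p`-th roots of unity, so that the vectors in question are the
elements of `μ_p ^ n`. Two facts carry the proof.

* Since `1, ζ, …, ζ^(p-2)` are linearly independent over `ℚ`, a vanishing sum of `n` elements of
  `μ_p` takes every value of `μ_p` equally often; hence the product of its terms is a constant `ε`
  depending on `n` and `p` only (`prod_eq_of_sum_eq_zero`). So `v_i` can be orthogonal to `w` only
  if `∏ v_i * ∏ w = ε`: the `v_i` with coordinate product `s` must take care of all `w` in the
  class `∏ w = ε / s`, and they are orthogonal to no `w` of another class.
* If a polynomial of degree `d` with `p * d < n * (p - 1)` vanishes on one class `∏ w = c` of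
  `μ_p ^ n`, it vanishes on all of `μ_p ^ n` (`sum_eq_zero_of_forall_class`). Indeed, the class is
  a coset of the subgroup `H` of vectors with product `1`, and distinct characters of `H` are
  linearly independent. Two monomials `w^a`, `w^b` agree on `H` only if `a - b` is constant
  modulo `p`, say `a - b ≡ t`. If `t` is not `0` modulo `p`, a weighted average of the two degrees
  shows that one of them is at least `n * (p - 1) / p` (`modEq_of_sub_const`).

Applied to `∏ (v_i · w)` over the `v_i` with coordinate product `s`, the two facts show that at
least `n * (p - 1) / p` of the `v_i` have coordinate product `s`. There are `p` values of `s`.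
-/

/-- In a vanishing sum of `n` complex `p`-th roots of unity each root occurs `n / p` times, so the
product of the terms is determined. -/
lemma prod_eq_of_sum_eq_zero {p n : ℕ} (hp : p.Prime) {ζ : ℂ} (hζ : IsPrimitiveRoot ζ p)
    (u : Fin n → ℂ) (hu : ∀ j, u j ^ p = 1) (h0 : ∑ j, u j = 0) :
    ∏ j, u j = (∏ r ∈ Finset.range p, ζ ^ r) ^ (n / p) := by
  have : Fact p.Prime := ⟨hp⟩
  have : NeZero p := ⟨hp.ne_zero⟩
  choose e he hue using fun j => hζ.eq_pow_of_pow_eq_one (hu j)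
  -- The coefficients of `Q` count how often each power of `ζ` occurs.
  let Q : Polynomial ℚ := ∑ j, Polynomial.X ^ e j
  have hQ : Polynomial.aeval ζ Q = 0 := by
    simp [Q, hue, h0]
  have hdvd : Polynomial.cyclotomic p ℚ ∣ Q := by
    rw [Polynomial.cyclotomic_eq_minpoly_rat hζ hp.pos]
    exact minpoly.dvd _ _ hQ
  have hcoeff : ∀ r, Q.coeff r = ((Finset.univ.filter fun j => e j = r).card : ℚ) := by
    intro r
    simp [Q, Polynomial.coeff_X_pow, Finset.sum_boole, eq_comm]
  obtain ⟨R, hR⟩ := hdvd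
  have hconst : ∃ c : ℚ, Q = Polynomial.cyclotomic p ℚ * Polynomial.C c := by
    by_cases hR0 : R = 0
    · exact ⟨0, by simp [hR, hR0]⟩
    have hdegQ : Q.natDegree ≤ p - 1 := by
      refine Polynomial.natDegree_sum_le_of_forall_le _ _ fun j _ => ?_
      rw [Polynomial.natDegree_X_pow]
      have := he j
      omega
    have hdeg : R.natDegree = 0 := by
      have h1 : Q.natDegree = (p - 1) + R.natDegree := by
        rw [hR, Polynomial.natDegree_mul (Polynomial.cyclotomic_ne_zero _ _) hR0,
          Polynomial.natDegree_cyclotomic, Nat.totient_prime hp]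
      omega
    exact ⟨R.coeff 0, by rw [hR, ← Polynomial.eq_C_of_natDegree_eq_zero hdeg]⟩
  obtain ⟨c, hc⟩ := hconst
  have hcount : ∀ r ∈ Finset.range p,
      ((Finset.univ.filter fun j => e j = r).card : ℚ) = c := by
    intro r hr
    rw [← hcoeff, hc, Polynomial.coeff_mul_C, Polynomial.cyclotomic_prime]
    simp [Polynomial.coeff_X_pow, Finset.mem_range.1 hr]
  have hmaps : ∀ j ∈ (Finset.univ : Finset (Fin n)), e j ∈ Finset.range p :=
    fun j _ => Finset.mem_range.2 (he j)
  have hcard : ∀ r ∈ Finset.range p, (Finset.univ.filter fun j => e j = r).card = n / p := by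
    have hsum : n = ∑ r ∈ Finset.range p, (Finset.univ.filter fun j => e j = r).card := by
      simpa using Finset.card_eq_sum_card_fiberwise (s := Finset.univ) hmaps
    intro r hr
    have hall : ∀ r' ∈ Finset.range p, (Finset.univ.filter fun j => e j = r').card
        = (Finset.univ.filter fun j => e j = r).card := by
      intro r' hr'
      exact_mod_cast (hcount r' hr').trans (hcount r hr).symm
    rw [Finset.sum_congr rfl hall] at hsum
    simp only [Finset.sum_const, Finset.card_range, smul_eq_mul] at hsum
    exact (Nat.div_eq_of_eq_mul_right hp.pos hsum).symm
  rw [← Finset.prod_fiberwise_of_maps_to hmaps, ← Finset.prod_pow]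
  refine Finset.prod_congr rfl fun r hr => ?_
  rw [← hcard r hr]
  refine Finset.prod_eq_pow_card fun j hj => ?_
  rw [← hue j, (Finset.mem_filter.1 hj).2]

/-- If `a - b` is constant modulo `p` and both `a` and `b` have small total degree, that constant
is `0`: otherwise, with `t` the representative of the constant in `(0, p)`, the inequality
`t * (p - t) ≤ t * b j + (p - t) * a j` holds for every `j`. -/
lemma modEq_of_sub_const {p n d : ℕ} (hp : p.Prime) (hd : p * d < n * (p - 1))
    (a b : Fin n → ℕ) (ha : ∑ j, a j ≤ d) (hb : ∑ j, b j ≤ d)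
    (hab : ∀ i j, (p : ℤ) ∣ ((a i : ℤ) - b i) - (a j - b j)) (j : Fin n) :
    (p : ℤ) ∣ (a j : ℤ) - b j := by
  have hp0 : (0 : ℤ) < p := by exact_mod_cast hp.pos
  by_contra hj
  obtain ⟨t, ht⟩ : ∃ t : ℤ, t = ((a j : ℤ) - b j) % p := ⟨_, rfl⟩
  have ht0 : 0 < t := by
    rcases (Int.emod_nonneg ((a j : ℤ) - b j) hp0.ne').lt_or_eq with h | h
    · omega
    · exact absurd (Int.dvd_of_emod_eq_zero h.symm) hj
  have htp : t < p := ht ▸ Int.emod_lt_of_pos _ hp0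
  have hi : ∀ i, t * (p - t) ≤ t * b i + (p - t) * a i := by
    intro i
    have hdvd : (p : ℤ) ∣ (a i : ℤ) - b i - t := by
      have h1 : (p : ℤ) ∣ (a j : ℤ) - b j - t := ht ▸ Int.dvd_self_sub_emod
      simpa using dvd_add (hab i j) h1
    have hb0 : (0 : ℤ) ≤ b i := by positivity
    have ha0 : (0 : ℤ) ≤ a i := by positivity
    by_cases hat : t ≤ a i
    · nlinarith
    · -- Here `b i - a i + t` is a positive multiple of `p`.
      have h2 : (p : ℤ) ∣ b i - a i + t := by
        rw [← dvd_neg] at hdvd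
        rwa [show (b i : ℤ) - a i + t = -((a i : ℤ) - b i - t) by ring]
      have h3 := Int.le_of_dvd (by omega) h2
      nlinarith
  have hsum := Finset.sum_le_sum fun i (_ : i ∈ (Finset.univ : Finset (Fin n))) => hi i
  rw [Finset.sum_const, Finset.sum_add_distrib, ← Finset.mul_sum, ← Finset.mul_sum,
    Finset.card_univ, Fintype.card_fin, nsmul_eq_mul] at hsum
  have ha' : (∑ i, (a i : ℤ)) ≤ d := by exact_mod_cast ha
  have hb' : (∑ i, (b i : ℤ)) ≤ d := by exact_mod_cast hb
  have hd' : (p : ℤ) * d < n * (p - 1) := by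
    have := hp.one_le
    zify [this] at hd
    exact hd
  have h4 : t * (∑ i, (b i : ℤ)) ≤ t * d := mul_le_mul_of_nonneg_left hb' ht0.le
  have h5 : (p - t) * (∑ i, (a i : ℤ)) ≤ (p - t) * d :=
    mul_le_mul_of_nonneg_left ha' (by omega)
  have h6 : (p : ℤ) - 1 ≤ t * (p - t) := by nlinarith
  have h7 : (n : ℤ) * (p - 1) ≤ n * (t * (p - t)) := mul_le_mul_of_nonneg_left h6 (by positivity)
  linarith

/-- The vectors of `p`-th roots of unity with coordinate product `1`. -/
def prodOneRoots (p n : ℕ) : Submonoid (Fin n → ℂ) where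
  carrier := {h | (∀ j, h j ^ p = 1) ∧ ∏ j, h j = 1}
  one_mem' := by simp
  mul_mem' := by
    rintro x y ⟨hx, hx'⟩ ⟨hy, hy'⟩
    exact ⟨fun j => by simp [mul_pow, hx, hy], by simp [Finset.prod_mul_distrib, hx', hy']⟩

/-- The monomial `h ↦ ∏ j, h j ^ a j` as a character of `prodOneRoots p n`. -/
def monomialChar (p n : ℕ) (a : Fin n → ℕ) : prodOneRoots p n →* ℂ where
  toFun h := ∏ j, h.1 j ^ a j
  map_one' := by simp
  map_mul' x y := by simp [mul_pow, Finset.prod_mul_distrib]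

/-- Monomials agreeing on `prodOneRoots p n` have exponents differing by a constant modulo `p`;
it suffices to test on vectors with entries `ζ` and `ζ⁻¹` in two places and `1` elsewhere. -/
lemma sub_const_of_monomialChar_eq {p n : ℕ} (hp : p.Prime) {ζ : ℂ} (hζ : IsPrimitiveRoot ζ p)
    (a b : Fin n → ℕ) (h : monomialChar p n a = monomialChar p n b) (i j : Fin n) :
    (p : ℤ) ∣ ((a i : ℤ) - b i) - (a j - b j) := by
  by_cases hij : i = j
  · simp [hij]
  have hζ0 : ζ ≠ 0 := hζ.ne_zero hp.ne_zero
  let x : Fin n → ℂ := Pi.mulSingle i ζ * Pi.mulSingle j ζ⁻¹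
  have hx : x ∈ prodOneRoots p n := by
    refine ⟨fun l => ?_, ?_⟩
    · by_cases h1 : l = i <;> by_cases h2 : l = j <;>
        simp_all [x, hζ.pow_eq_one]
    · simp [x, Finset.prod_mul_distrib, hζ0]
  have key : ∀ e : Fin n → ℕ, monomialChar p n e ⟨x, hx⟩ = ζ ^ ((e i : ℤ) - e j) := by
    intro e
    simp only [monomialChar, MonoidHom.coe_mk, OneHom.coe_mk, x, Pi.mul_apply, mul_pow,
      Finset.prod_mul_distrib, Pi.mulSingle_apply, ite_pow, one_pow, Finset.prod_ite_eq',
      Finset.mem_univ, if_true]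
    rw [zpow_sub₀ hζ0]
    simp [div_eq_mul_inv]
  have h1 := key a
  rw [h, key b] at h1
  have h2 : ζ ^ (((a i : ℤ) - a j) - (b i - b j)) = 1 := by
    rw [zpow_sub₀ hζ0, ← h1, div_self (zpow_ne_zero _ hζ0)]
  have h3 := (hζ.zpow_eq_one_iff_dvd _).1 h2
  convert h3 using 1
  ring

/-- A polynomial `∑ i, m i * w ^ a i` of small degree that vanishes on one class `∏ w = c` of
vectors of `p`-th roots of unity vanishes on all of them. -/
lemma sum_eq_zero_of_forall_class {p n d : ℕ} (hp : p.Prime) {ζ : ℂ} (hζ : IsPrimitiveRoot ζ p)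
    (hd : p * d < n * (p - 1)) {ι : Type*} [Fintype ι] (m : ι → ℂ) (a : ι → Fin n → ℕ)
    (ha : ∀ i, ∑ j, a i j ≤ d) {c : ℂ} (hc : c ^ p = 1)
    (hvan : ∀ w : Fin n → ℂ, (∀ j, w j ^ p = 1) → ∏ j, w j = c →
      ∑ i, m i * ∏ j, w j ^ a i j = 0)
    (w : Fin n → ℂ) (hw : ∀ j, w j ^ p = 1) :
    ∑ i, m i * ∏ j, w j ^ a i j = 0 := by
  classical
  have hn : 0 < n := by
    rcases Nat.eq_zero_or_pos n with rfl | h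
    · simp at hd
    · exact h
  let w₁ : Fin n → ℂ := Pi.mulSingle ⟨0, hn⟩ c
  have hw₁ : ∀ j, w₁ j ^ p = 1 := by
    intro j
    by_cases h : j = ⟨0, hn⟩ <;> simp [w₁, h, hc]
  have hw₁0 : ∀ j, w₁ j ≠ 0 := by
    intro j h
    have := hw₁ j
    simp [h, hp.ne_zero] at this
  have hw₁c : ∏ j, w₁ j = c := by simp [w₁]
  let ψ : ι → (prodOneRoots p n →* ℂ) := fun i => monomialChar p n (a i)
  have hmaps : ∀ i ∈ (Finset.univ : Finset ι), ψ i ∈ Finset.univ.image ψ :=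
    fun i hi => Finset.mem_image_of_mem _ hi
  -- Monomials with the same restriction to the subgroup are collected before using the
  -- independence of characters.
  have hzero : ∀ χ ∈ Finset.univ.image ψ,
      ∑ i with ψ i = χ, m i * ∏ j, w₁ j ^ a i j = 0 := by
    refine (linearIndependent_iff'.1 (linearIndependent_monoidHom (prodOneRoots p n) ℂ))
      (Finset.univ.image ψ) (fun χ => ∑ i with ψ i = χ, m i * ∏ j, w₁ j ^ a i j) ?_
    funext h
    simp only [Finset.sum_apply, Pi.smul_apply, smul_eq_mul, Pi.zero_apply]
    have h1 := hvan (w₁ * h.1) (fun j => by simp [mul_pow, hw₁, h.2.1 j])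
      (by simp [Finset.prod_mul_distrib, hw₁c, h.2.2])
    rw [← h1, ← Finset.sum_fiberwise_of_maps_to hmaps]
    refine Finset.sum_congr rfl fun χ _ => ?_
    rw [Finset.sum_mul]
    refine Finset.sum_congr rfl fun i hi => ?_
    rw [← (Finset.mem_filter.1 hi).2]
    simp [ψ, monomialChar, mul_pow, Finset.prod_mul_distrib, mul_assoc]
  rw [← Finset.sum_fiberwise_of_maps_to hmaps]
  refine Finset.sum_eq_zero fun χ hχ => ?_
  obtain ⟨i₀, -, rfl⟩ := Finset.mem_image.1 hχ
  -- Within one group the exponents agree modulo `p`, so `w ^ a i / w₁ ^ a i` does not depend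
  -- on `i`.
  have hratio : ∀ i, ψ i = ψ i₀ → ∏ j, w j ^ a i j =
      (∏ j, (w j / w₁ j) ^ a i₀ j) * ∏ j, w₁ j ^ a i j := by
    intro i hi
    rw [← Finset.prod_mul_distrib]
    refine Finset.prod_congr rfl fun j _ => ?_
    have hmod := modEq_of_sub_const hp hd (a i) (a i₀) (ha i) (ha i₀)
      (sub_const_of_monomialChar_eq hp hζ _ _ hi) j
    have hr : (w j / w₁ j) ^ p = 1 := by rw [div_pow, hw, hw₁, div_one]
    have hr0 : w j / w₁ j ≠ 0 := by
      intro h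
      simp [h, hp.ne_zero] at hr
    have hpow : (w j / w₁ j) ^ a i₀ j = (w j / w₁ j) ^ a i j := by
      obtain ⟨q, hq⟩ := hmod
      have h2 : (a i j : ℤ) = a i₀ j + p * q := by omega
      rw [← zpow_natCast _ (a i j), h2, zpow_add₀ hr0, zpow_mul, zpow_natCast, zpow_natCast, hr,
        one_zpow, mul_one]
    rw [hpow, ← mul_pow, div_mul_cancel₀ _ (hw₁0 j)]
  calc ∑ i with ψ i = ψ i₀, m i * ∏ j, w j ^ a i j
      = ∑ i with ψ i = ψ i₀, (∏ j, (w j / w₁ j) ^ a i₀ j) * (m i * ∏ j, w₁ j ^ a i j) := by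
        refine Finset.sum_congr rfl fun i hi => ?_
        rw [hratio i (Finset.mem_filter.1 hi).2]
        ring
    _ = 0 := by rw [← Finset.mul_sum, hzero _ hχ, mul_zero]

/-- The case of `sum_eq_zero_of_forall_class` where the polynomial is a product of linear forms. -/
lemma prod_eq_zero_of_forall_class {p n : ℕ} (hp : p.Prime) {ζ : ℂ} (hζ : IsPrimitiveRoot ζ p)
    {κ : Type*} [Fintype κ] (hd : p * Fintype.card κ < n * (p - 1)) (v : κ → Fin n → ℂ)
    {c : ℂ} (hc : c ^ p = 1)
    (hvan : ∀ w : Fin n → ℂ, (∀ j, w j ^ p = 1) → ∏ j, w j = c → ∃ i, ∑ j, v i j * w j = 0)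
    (w : Fin n → ℂ) (hw : ∀ j, w j ^ p = 1) : ∃ i, ∑ j, v i j * w j = 0 := by
  classical
  have hexp : ∀ w : Fin n → ℂ, ∏ i, ∑ j, v i j * w j =
      ∑ f : κ → Fin n, (∏ i, v i (f i)) * ∏ j, w j ^ (Finset.univ.filter fun i => f i = j).card := by
    intro w
    rw [Finset.prod_univ_sum, Fintype.piFinset_univ]
    refine Finset.sum_congr rfl fun f _ => ?_
    rw [Finset.prod_mul_distrib, ← Finset.prod_fiberwise Finset.univ f fun i => w (f i)]
    congr 1
    refine Finset.prod_congr rfl fun j _ => ?_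
    refine Finset.prod_eq_pow_card fun i hi => ?_
    rw [(Finset.mem_filter.1 hi).2]
  have h := sum_eq_zero_of_forall_class hp hζ hd (fun f : κ → Fin n => ∏ i, v i (f i))
    (fun f j => (Finset.univ.filter fun i => f i = j).card)
    (fun f => (Finset.card_eq_sum_card_fiberwise (s := Finset.univ) (t := Finset.univ)
      (f := f) (fun _ _ => by simp)).ge) hc
    (fun w hw hwc => by
      obtain ⟨i, hi⟩ := hvan w hw hwc
      rw [← hexp]
      exact Finset.prod_eq_zero (Finset.mem_univ i) hi) w hw
  rw [← hexp] at h
  obtain ⟨i, -, hi⟩ := Finset.prod_eq_zero_iff.1 h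
  exact ⟨i, hi⟩

/-- If `v_1, …, v_k` are vectors with coordinates `p`-th roots of unity such that every
vector `w` with coordinates `p`-th roots of unity is orthogonal (with respect to the
bilinear scalar product) to some `v_i`, then `k ≥ n(p-1)`. -/
theorem stmt8 (p n k : ℕ) (hp : p.Prime) (hpn : p ∣ n) (hn : 0 < n)
    (v : Fin k → Fin n → ℂ) (hv : ∀ i j, v i j ^ p = 1)
    (hbal : ∀ w : Fin n → ℂ, (∀ j, w j ^ p = 1) → ∃ i, ∑ j, v i j * w j = 0) :
    n * (p - 1) ≤ k := by
  classical
  obtain ⟨ζ, hζ⟩ : ∃ ζ : ℂ, IsPrimitiveRoot ζ p := ⟨_, Complex.isPrimitiveRoot_exp p hp.ne_zero⟩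
  obtain ⟨ε, hε⟩ : ∃ ε : ℂ, ε = (∏ r ∈ Finset.range p, ζ ^ r) ^ (n / p) := ⟨_, rfl⟩
  have hεp : ε ^ p = 1 := by
    rw [hε, ← pow_mul, mul_comm, pow_mul, ← Finset.prod_pow]
    simp [← pow_mul, mul_comm _ p, pow_mul ζ p, hζ.pow_eq_one]
  have hclass : ∀ i (w : Fin n → ℂ), (∀ j, w j ^ p = 1) → ∑ j, v i j * w j = 0 →
      (∏ j, v i j) * ∏ j, w j = ε := by
    intro i w hw h
    rw [← Finset.prod_mul_distrib, hε]
    exact prod_eq_of_sum_eq_zero hp hζ _ (fun j => by rw [mul_pow, hv, hw, one_mul]) h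
  have hfib : ∀ s ∈ Polynomial.nthRootsFinset p (1 : ℂ),
      n * (p - 1) ≤ p * (Finset.univ.filter fun i => ∏ j, v i j = s).card := by
    intro s hs
    rw [Polynomial.mem_nthRootsFinset hp.pos] at hs
    have hs0 : s ≠ 0 := by
      rintro rfl
      simp [hp.ne_zero] at hs
    have hε0 : ε ≠ 0 := by
      intro h
      simp [h, hp.ne_zero] at hεp
    by_contra! hlt
    rw [← Fintype.card_subtype] at hlt
    -- The vector `w₀` lies in the class `∏ w = (ε / s) * ζ`, which differs from `∏ w = ε / s`.
    let w₀ : Fin n → ℂ := Pi.mulSingle ⟨0, hn⟩ (ε / s * ζ)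
    have hw₀ : ∀ j, w₀ j ^ p = 1 := by
      intro j
      by_cases h : j = ⟨0, hn⟩ <;>
        simp [w₀, h, mul_pow, div_pow, hs, hεp, hζ.pow_eq_one]
    obtain ⟨⟨i, hi⟩, h0⟩ := prod_eq_zero_of_forall_class hp hζ hlt (fun i => v i.1)
      (c := ε / s) (by rw [div_pow, hεp, hs, div_one])
      (fun w hw hwc => by
        obtain ⟨i, hi⟩ := hbal w hw
        have h1 := hclass i w hw hi
        rw [hwc, mul_div_assoc', div_eq_iff hs0, mul_comm] at h1
        exact ⟨⟨i, mul_left_cancel₀ hε0 h1⟩, hi⟩) w₀ hw₀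
    have h1 := hclass i w₀ hw₀ h0
    have h2 : ∏ j, w₀ j = ε / s * ζ := by simp [w₀]
    rw [hi, h2, ← mul_assoc, mul_div_cancel₀ _ hs0] at h1
    exact hζ.ne_one hp.one_lt (mul_left_cancel₀ hε0 (h1.trans (mul_one ε).symm))
  have hk : k = ∑ s ∈ Polynomial.nthRootsFinset p (1 : ℂ),
      (Finset.univ.filter fun i => ∏ j, v i j = s).card := by
    have hmaps : ∀ i ∈ (Finset.univ : Finset (Fin k)),
        ∏ j, v i j ∈ Polynomial.nthRootsFinset p (1 : ℂ) := by
      intro i _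
      rw [Polynomial.mem_nthRootsFinset hp.pos, ← Finset.prod_pow]
      exact Finset.prod_eq_one fun j _ => hv i j
    simpa using Finset.card_eq_sum_card_fiberwise (s := Finset.univ) hmaps
  have hsum := Finset.sum_le_sum hfib
  rw [Finset.sum_const, ← Finset.mul_sum, ← hk, hζ.card_nthRootsFinset, smul_eq_mul] at hsum
  exact Nat.le_of_mul_le_mul_left hsum hp.pos
end

section
/- Let p be a prime dividing n, ω = e^{2πi/p}, B_0 = {x ∈ {1,ω,...,ω^{p-1}}^n : x_1⋯x_n = 1}, and let D be the set of monomials x_1^{u_1}⋯x_n^{u_n} with 0 ≤ u_i ≤ p-1. Define monomials x^u ≡ x^v iff there is k with u_i + k ≡ v_i (mod p) for all i. For any term order ≺ on ℂ[x_1,...,x_n], the standard monomials of I(B_0) are exactly the monomials in D that are ≺-minimal in their ≡-equivalence class. -/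
/-!
The proof rests on the orthogonality of characters on the finite group `B₀`.

A monomial restricts to a character of `B₀`, and since `x_i ^ p = 1` and `∏ x_i = 1` on `B₀`,
lowering an exponent by `p` or translating all exponents by a constant mod `p` does not change
this character. So if `u` has an exponent `≥ p`, or is not minimal in its class, a difference of
two monomials in `I(B₀)` has leading monomial `u`.

Conversely, let `u` be reduced and minimal, and let `f ∈ I(B₀)` have leading monomial `u`. Summing
`f(x) * x ^ ((p - 1) u)` over `B₀` keeps only the terms `x ^ v` of `f` with `v - u` constant mod `p`
(`sum_monomial_eq_zero`). Such a `v` satisfies `u ≼ v mod p ≼ v ≼ u`, so `v = u`, and the sum is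
`|B₀|` times the coefficient of `u`, which is nonzero although `f` vanishes on `B₀`.
-/

open MvPolynomial

/-- The set of polynomials vanishing on `S` (the vanishing ideal, as a set). -/
def vanishingOn {σ F : Type*} [CommSemiring F] (S : Set (σ → F)) :
    Set (MvPolynomial σ F) :=
  {f | ∀ x ∈ S, MvPolynomial.eval x f = 0}

/-- `u` is the leading monomial of `f` with respect to the term order `m`. -/
def IsLeadingMonomial {σ F : Type*} [CommSemiring F] (m : MonomialOrder σ)
    (f : MvPolynomial σ F) (u : σ →₀ ℕ) : Prop :=
  u ∈ f.support ∧ ∀ v ∈ f.support, m.toSyn v ≤ m.toSyn u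

/-- `u` is a standard monomial of the vanishing ideal of `S` with respect to `m`. -/
def IsStandard {σ F : Type*} [CommSemiring F] (m : MonomialOrder σ)
    (S : Set (σ → F)) (u : σ →₀ ℕ) : Prop :=
  ¬ ∃ f ∈ vanishingOn S, IsLeadingMonomial m f u

/-- The set `B₀` of vectors of `p`-th roots of unity with product `1`. -/
def rootSet (p n : ℕ) : Set (Fin n → ℂ) := {x | (∀ i, x i ^ p = 1) ∧ ∏ i, x i = 1}

lemma rootSet_finite {p : ℕ} (n : ℕ) (hp : 0 < p) : (rootSet p n).Finite := by
  have h1 : {z : ℂ | z ^ p = 1}.Finite := by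
    refine (Polynomial.nthRoots p (1 : ℂ)).toFinset.finite_toSet.subset fun z hz => ?_
    simpa [Polynomial.mem_nthRoots hp] using hz
  exact (Set.Finite.pi (t := fun _ : Fin n => {z : ℂ | z ^ p = 1}) fun _ => h1).subset
    fun x hx i _ => hx.1 i

lemma mul_mem_rootSet {p n : ℕ} {x y : Fin n → ℂ} (hx : x ∈ rootSet p n)
    (hy : y ∈ rootSet p n) : x * y ∈ rootSet p n :=
  ⟨fun i => by simp [mul_pow, hx.1 i, hy.1 i], by simp [Finset.prod_mul_distrib, hx.2, hy.2]⟩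

lemma inv_mem_rootSet {p n : ℕ} {x : Fin n → ℂ} (hx : x ∈ rootSet p n) :
    x⁻¹ ∈ rootSet p n :=
  ⟨fun i => by simp [hx.1 i], by simp [hx.2]⟩

/-- The group `B₀` separates exponents that differ mod `p`: a point with `ω` and `ω⁻¹` in two
coordinates and `1` elsewhere does it. -/
lemma exists_prod_pow_ne_one {p n : ℕ} (hp : 0 < p) {w : Fin n → ℕ} {i j : Fin n}
    (hij : ¬ w i ≡ w j [MOD p]) :
    ∃ y ∈ rootSet p n, ∏ k, y k ^ w k ≠ 1 := by
  have hne : i ≠ j := by rintro rfl; exact hij rfl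
  have hω := Complex.isPrimitiveRoot_exp p hp.ne'
  set ω := Complex.exp (2 * Real.pi * Complex.I / p)
  have hω0 : ω ≠ 0 := hω.ne_zero hp.ne'
  refine ⟨Pi.mulSingle i ω * Pi.mulSingle j ω⁻¹, ⟨fun k => ?_, ?_⟩, ?_⟩
  · simp only [Pi.mul_apply, Pi.mulSingle_apply, mul_pow]
    split_ifs <;> simp [hω.pow_eq_one]
  · simp [Finset.prod_mul_distrib, hω0]
  · have key (l : Fin n) (z : ℂ) :
        ∏ k, (Pi.mulSingle l z : Fin n → ℂ) k ^ w k = z ^ w l := by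
      rw [Finset.prod_eq_single l (fun b _ hb => by simp [hb]) (by simp)]
      simp
    simp only [Pi.mul_apply, mul_pow, Finset.prod_mul_distrib, key]
    intro h
    apply hij
    have h2 : ω ^ w i = ω ^ w j := by
      have := pow_ne_zero (w j) hω0
      rw [inv_pow] at h
      field_simp at h
      exact h
    rw [hω.eq_orderOf]
    exact (isOfFinOrder_iff_pow_eq_one.2 ⟨p, hp, hω.pow_eq_one⟩).pow_eq_pow_iff_modEq.1 h2

/-- A monomial that is a nontrivial character of `B₀` sums to zero over `B₀`. -/
lemma sum_monomial_eq_zero {p n : ℕ} (hp : 0 < p) {w : Fin n → ℕ} {i j : Fin n}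
    (hij : ¬ w i ≡ w j [MOD p]) :
    ∑ x ∈ (rootSet_finite n hp).toFinset, ∏ k, x k ^ w k = 0 := by
  obtain ⟨y, hy, hne⟩ := exists_prod_pow_ne_one hp hij
  have hy0 (k : Fin n) : y k ≠ 0 := by
    intro h
    have := hy.1 k
    simp [h, hp.ne'] at this
  have hinv : y * y⁻¹ = 1 := by ext k; simp [hy0 k]
  have h : ∑ x ∈ (rootSet_finite n hp).toFinset, ∏ k, x k ^ w k =
      (∏ k, y k ^ w k) * ∑ x ∈ (rootSet_finite n hp).toFinset, ∏ k, x k ^ w k := by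
    rw [Finset.mul_sum]
    symm
    refine Finset.sum_bij' (fun x _ => x * y) (fun x _ => x * y⁻¹) ?_ ?_ ?_ ?_ ?_
    · intro x hx
      simp only [Set.Finite.mem_toFinset] at hx ⊢
      exact mul_mem_rootSet hx hy
    · intro x hx
      simp only [Set.Finite.mem_toFinset] at hx ⊢
      exact mul_mem_rootSet hx (inv_mem_rootSet hy)
    · intro x _
      rw [mul_assoc, hinv, mul_one]
    · intro x _
      rw [mul_assoc, mul_comm y⁻¹, hinv, mul_one]
    · intro x _
      simp [mul_pow, Finset.prod_mul_distrib, mul_comm]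
  by_contra h0
  exact hne (mul_right_cancel₀ h0 (by rw [one_mul]; exact h.symm))

/-- If a strictly smaller monomial agrees with `x ^ u` on `S`, then `u` is not standard. -/
lemma not_isStandard_of_lt {n : ℕ} {m : MonomialOrder (Fin n)} {S : Set (Fin n → ℂ)}
    {u v : Fin n →₀ ℕ} (hlt : m.toSyn v < m.toSyn u)
    (h : ∀ x ∈ S, ∏ i, x i ^ u i = ∏ i, x i ^ v i) : ¬ IsStandard m S u := by
  have hne : v ≠ u := by rintro rfl; exact lt_irrefl _ hlt
  refine not_not.2 ⟨monomial u 1 - monomial v 1, fun x hx => ?_, ?_, fun t ht => ?_⟩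
  · simp [eval_monomial, Finsupp.prod_fintype, h x hx]
  · simp [mem_support_iff, coeff_monomial, hne]
  · by_cases h1 : u = t
    · rw [h1]
    by_cases h2 : v = t
    · exact h2 ▸ hlt.le
    simp [mem_support_iff, coeff_monomial, h1, h2] at ht

/-- For `p` a prime dividing `n` and `B_0` the set of vectors of `p`-th roots of unity with
coordinate product `1`, the standard monomials of `I(B_0)` with respect to any term order
are exactly the monomials with all exponents at most `p-1` which are minimal in their
equivalence class under simultaneous translation of all exponents modulo `p`. -/
theorem stmt12 (p n : ℕ) (hp : p.Prime) (hpn : p ∣ n) (hn : 0 < n)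
    (m : MonomialOrder (Fin n)) :
    ∀ u : Fin n →₀ ℕ,
      IsStandard m {x : Fin n → ℂ | (∀ i, x i ^ p = 1) ∧ ∏ i, x i = 1} u ↔
        ((∀ i, u i ≤ p - 1) ∧
          ∀ v : Fin n →₀ ℕ, (∀ i, v i ≤ p - 1) →
            (∃ k : ℕ, ∀ i, (u i + k) % p = v i) → m.toSyn u ≤ m.toSyn v) := by
  intro u
  have hp0 := hp.pos
  constructor
  · intro hu
    refine ⟨fun i => ?_, fun v _ ⟨k, hk⟩ => ?_⟩
    · by_contra hi
      have hle : Finsupp.single i p ≤ u := Finsupp.single_le_iff.2 (by omega)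
      have hlt : u - Finsupp.single i p < u := by
        refine lt_of_le_of_ne tsub_le_self fun h => ?_
        have := DFunLike.congr_fun h i
        simp at this
        omega
      refine not_isStandard_of_lt (m.toSyn_strictMono hlt) (fun x hx => ?_) hu
      refine Finset.prod_congr rfl fun j _ => ?_
      by_cases hj : i = j
      · subst hj
        have : u i = (u i - p) + p := by omega
        simp only [Finsupp.tsub_apply, Finsupp.single_eq_same]
        conv_lhs => rw [this, pow_add, hx.1 i, mul_one]
      · simp [hj]
    · by_contra hlt
      refine not_isStandard_of_lt (not_le.1 hlt) (fun x hx => ?_) hu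
      calc ∏ i, x i ^ u i = (∏ i, x i ^ u i) * (∏ i, x i) ^ k := by simp [hx.2]
        _ = ∏ i, x i ^ (u i + k) := by
          rw [← Finset.prod_pow, ← Finset.prod_mul_distrib]
          simp only [pow_add]
        _ = ∏ i, x i ^ v i := Finset.prod_congr rfl fun i _ => by
          rw [← hk i, ← pow_eq_pow_mod _ (hx.1 i)]
  · rintro ⟨-, hmin⟩ ⟨f, hf, hfu, hlead⟩
    set B := (rootSet_finite n hp0).toFinset
    have h0 : ∑ x ∈ B, eval x f * ∏ i, x i ^ ((p - 1) * u i) = 0 :=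
      Finset.sum_eq_zero fun x hx => by
        rw [hf x ((rootSet_finite n hp0).mem_toFinset.1 hx), zero_mul]
    have hswap : ∑ x ∈ B, eval x f * ∏ i, x i ^ ((p - 1) * u i) =
        ∑ v ∈ f.support, coeff v f * ∑ x ∈ B, ∏ i, x i ^ (v i + (p - 1) * u i) := by
      simp_rw [eval_eq', Finset.sum_mul, Finset.mul_sum]
      rw [Finset.sum_comm]
      simp only [pow_add, Finset.prod_mul_distrib, mul_assoc]
    have hpu (i : Fin n) : u i + (p - 1) * u i = p * u i := by
      obtain ⟨q, rfl⟩ : ∃ q, p = q + 1 := ⟨p - 1, by omega⟩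
      simp; ring
    rw [hswap, Finset.sum_eq_single u ?_ (fun h => absurd hfu h)] at h0
    · have hcard : ∑ x ∈ B, ∏ i, x i ^ (u i + (p - 1) * u i) = (B.card : ℂ) := by
        rw [Finset.sum_congr rfl (g := fun _ => 1) fun x hx => ?_]
        · simp
        · have hx' : x ∈ rootSet p n := by simpa [B] using hx
          exact Finset.prod_eq_one fun i _ => by rw [hpu, pow_mul, hx'.1 i, one_pow]
      rw [hcard] at h0
      have hB : B.card ≠ 0 :=
        Finset.card_ne_zero_of_mem (a := 1) (by simp [B, rootSet])
      exact mul_ne_zero (mem_support_iff.1 hfu) (Nat.cast_ne_zero.2 hB) h0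
    · intro v hv hvu
      by_cases hw : ∀ i j, v i + (p - 1) * u i ≡ v j + (p - 1) * u j [MOD p]
      · exfalso
        let i₀ : Fin n := ⟨0, hn⟩
        -- the exponents `v i + (p - 1) * u i` represent `v i - u i`, so their common residue
        -- is the shift taking `u` to `v mod p`
        let v' : Fin n →₀ ℕ := Finsupp.equivFunOnFinite.symm fun i => v i % p
        have h1 : m.toSyn u ≤ m.toSyn v' := by
          refine hmin v' (fun i => ?_) ⟨v i₀ + (p - 1) * u i₀, fun i => ?_⟩
          · have := Nat.mod_lt (v i) hp0
            simp only [v', Finsupp.equivFunOnFinite_symm_apply_apply]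
            omega
          · have h2 := (hw i₀ i).add_left (u i)
            have h3 : u i + (v i + (p - 1) * u i) = v i + p * u i := by
              rw [← hpu]; ring
            rw [h3] at h2
            simpa [Nat.ModEq, v'] using h2
        have h2 : m.toSyn v' ≤ m.toSyn v :=
          m.toSyn_monotone fun i => by simpa [v'] using Nat.mod_le _ _
        exact hvu (m.toSyn.injective (le_antisymm (hlead v hv) (h1.trans h2)))
      · push Not at hw
        obtain ⟨i, j, hij⟩ := hw
        rw [sum_monomial_eq_zero hp0 (w := fun i => v i + (p - 1) * u i) hij, mul_zero]
end
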